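/- Let n ≥ 1, let X ⊂ ℝ^n be a nonempty compact set and let f : X → X be a continuous map with modulus of continuity ω. Suppose there exist an integer m ≥ 2 and δ > 0 such that f has the (m,δ)-separated preimage property on X. Let h : (0,η] → (0,∞) be a gauge function and suppose that for all sufficiently large k ∈ ℕ there exists t_k ∈ (0,η] with h(t_k) = 1/m^k and ω^k(t_k) ≤ δ/2. Then there exist a Borel probability measure μ on ℝ^n supported on X and a constant η' > 0 such that μ(B(x,r)) ≤ h(r) for every x ∈ X and every r with 0 < r ≤ η', where B(x,r) denotes the open Euclidean ball of radius r centered at x. -/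

import Mathlib

open MeasureTheory Metric Set Filter

/-!
Choose for every point `m` preimages at mutual distance at least `δ`, and spread mass backwards from
a fixed base point: after `k` steps each of the `m ^ k` points of the backward tree carries mass
`m⁻¹ ^ k`. If the points of a set `B` stay closer than `δ` to each other under
`f^[0], …, f^[K - 1]`, then at each of the last `K` backward steps at most one of the `m` branches
leads into `B`. So `B` has mass at most `m⁻¹ ^ K` at every stage `k ≥ K`, and, if `B` is open, also
for every weak limit `μ` of these measures.

For large `k`, a ball of radius `t k` is such a set with `K = k + 1`: the orbit of `t k` under the
monotone map `ω` is monotone, so `ω^[j] (t k) ≤ max (t k) (ω^[k] (t k)) ≤ δ / 2` for all `j ≤ k`.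
A small `r` has `1 / m ^ (k + 1) ≤ h r < 1 / m ^ k` for some large `k`, hence `r < t k` and
`μ (ball x r) ≤ m⁻¹ ^ (k + 1) ≤ h r`.
-/

section Gauge

lemma exists_succ_le_and_lt {α : Type*} [LinearOrder α] {u : ℕ → α} {a : α} {K : ℕ}
    (hK : a < u K) (hle : ∃ k ≥ K, u k ≤ a) : ∃ k ≥ K, u (k + 1) ≤ a ∧ a < u k := by
  by_contra! hstep
  obtain ⟨k, hKk, hk⟩ := hle
  have hlt : a < u k := Nat.le_induction hK
    (fun n hn han => not_le.1 fun hle => (hstep n hn hle).not_gt han) k hKk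
  exact hk.not_gt hlt

lemma iterate_le_max_of_monotone {α : Type*} [LinearOrder α] {φ : α → α} (hφ : Monotone φ)
    (x : α) {j k : ℕ} (hjk : j ≤ k) : φ^[j] x ≤ max x (φ^[k] x) := by
  rcases le_total x (φ x) with hup | hdown
  · exact le_max_of_le_right (hφ.monotone_iterate_of_le_map hup hjk)
  · exact le_max_of_le_left (hφ.antitone_iterate_of_map_le hdown (Nat.zero_le j))

lemma iterate_le_max_of_monotoneOn {α : Type*} [LinearOrder α] {φ : α → α} {s : Set α}
    (hφ : MonotoneOn φ s) (hs : MapsTo φ s s) {x : α} (hx : x ∈ s) {j k : ℕ} (hjk : j ≤ k) :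
    φ^[j] x ≤ max x (φ^[k] x) := by
  have hrestrict : Monotone (hs.restrict φ s s) := fun a b hab => hφ a.2 b.2 hab
  have hmax := iterate_le_max_of_monotone hrestrict ⟨x, hx⟩ hjk
  rw [hs.iterate_restrict, hs.iterate_restrict] at hmax
  rcases le_max_iff.1 hmax with hle | hle
  · exact le_max_of_le_left hle
  · exact le_max_of_le_right hle

lemma tendsto_one_div_pow_atTop_nhds_zero {a : ℝ} (ha : 1 < a) :
    Tendsto (fun k : ℕ => 1 / a ^ k) atTop (nhds 0) := by
  simpa only [one_div, Function.comp_def] using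
    tendsto_inv_atTop_zero.comp (tendsto_pow_atTop_atTop_of_one_lt ha)

variable {ω h : ℝ → ℝ} {a δ η : ℝ}

lemma eventually_exists_forall_iterate_le
    (hω : MonotoneOn ω (Ici 0)) (hωmaps : MapsTo ω (Ici 0) (Ici 0)) (ha : 1 < a) (hδ : 0 < δ)
    (hη : 0 < η) (hmono : MonotoneOn h (Ioc 0 η)) (hpos : ∀ t ∈ Ioc 0 η, 0 < h t)
    (hk : ∀ᶠ k : ℕ in atTop, ∃ t ∈ Ioc 0 η, h t = 1 / a ^ k ∧ ω^[k] t ≤ δ / 2) :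
    ∀ᶠ k : ℕ in atTop, ∃ t ∈ Ioc 0 η, h t = 1 / a ^ k ∧ ∀ j ≤ k, ω^[j] t ≤ δ / 2 := by
  have hs : min (δ / 2) η ∈ Ioc 0 η := ⟨lt_min (half_pos hδ) hη, min_le_right _ _⟩
  filter_upwards [hk, (tendsto_one_div_pow_atTop_nhds_zero ha).eventually_lt_const (hpos _ hs)]
    with k ⟨t, ht, hht, hωt⟩ hsmall
  have htδ : t ≤ δ / 2 :=
    (hmono.reflect_lt ht hs (hht.trans_lt hsmall)).le.trans (min_le_left _ _)
  exact ⟨t, ht, hht, fun j hj =>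
    (iterate_le_max_of_monotoneOn hω hωmaps ht.1.le hj).trans (max_le htδ hωt)⟩

lemma exists_forall_exists_le_and_one_div_pow_le (ha : 1 < a) (hmono : MonotoneOn h (Ioc 0 η))
    (hpos : ∀ t ∈ Ioc 0 η, 0 < h t) {p : ℕ → ℝ → Prop}
    (hp : ∀ᶠ k : ℕ in atTop, ∃ t ∈ Ioc 0 η, h t = 1 / a ^ k ∧ p k t) :
    ∃ η' > 0, ∀ r, 0 < r → r ≤ η' →
      ∃ (k : ℕ) (t : ℝ), r ≤ t ∧ p k t ∧ 1 / a ^ (k + 1) ≤ h r := by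
  obtain ⟨K, hK⟩ := eventually_atTop.1 hp
  obtain ⟨η', hη', hhη', -⟩ := hK (K + 1) K.le_succ
  refine ⟨η', hη'.1, fun r hr hrη' => ?_⟩
  have hrη : r ∈ Ioc 0 η := ⟨hr, hrη'.trans hη'.2⟩
  have hlt : h r < 1 / a ^ K := by
    refine (hmono hrη hη' hrη').trans_lt (hhη'.trans_lt ?_)
    exact one_div_lt_one_div_of_lt (by positivity) (pow_lt_pow_right₀ ha K.lt_succ_self)
  have hle : ∃ k ≥ K, 1 / a ^ k ≤ h r :=
    ((eventually_ge_atTop K).and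
      ((tendsto_one_div_pow_atTop_nhds_zero ha).eventually_le_const (hpos r hrη))).exists
  obtain ⟨k, hKk, hkle, hklt⟩ := exists_succ_le_and_lt hlt hle
  obtain ⟨t, ht, hht, hpt⟩ := hK k hKk
  exact ⟨k, t, (hmono.reflect_lt hrη ht (hklt.trans_eq hht.symm)).le, hpt, hkle⟩

end Gauge

section Tree

/-- The distribution after `k` steps of the random walk which starts at `y` and at each step applies
one of the maps `g i`, chosen uniformly. When the `g i` are right inverses of a map `f`, it is a
measure of mass one on `f^[k] ⁻¹' {y}`. -/
noncomputable def treeMeasure {ι Y : Type*} [Fintype ι] [MeasurableSpace Y] (g : ι → Y → Y) :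
    ℕ → Y → Measure Y
  | 0, y => Measure.dirac y
  | k + 1, y => (Fintype.card ι : ENNReal)⁻¹ • ∑ i, treeMeasure g k (g i y)

variable {ι Y : Type*} [Fintype ι] [MeasurableSpace Y] {f : Y → Y} {g : ι → Y → Y} {B : Set Y}

lemma treeMeasure_succ_apply (g : ι → Y → Y) (k : ℕ) (y : Y) (B : Set Y) :
    treeMeasure g (k + 1) y B =
      (Fintype.card ι : ENNReal)⁻¹ * ∑ i, treeMeasure g k (g i y) B := by
  simp only [treeMeasure, Measure.smul_apply, Measure.finsetSum_apply, smul_eq_mul]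

lemma inv_card_mul_sum_const [Nonempty ι] (c : ENNReal) :
    (Fintype.card ι : ENNReal)⁻¹ * ∑ _i : ι, c = c := by
  rw [Finset.sum_const, Finset.card_univ, nsmul_eq_mul, ← mul_assoc,
    ENNReal.inv_mul_cancel (Nat.cast_ne_zero.2 Fintype.card_ne_zero) (ENNReal.natCast_ne_top _),
    one_mul]

instance isProbabilityMeasure_treeMeasure [Nonempty ι] (g : ι → Y → Y) (k : ℕ) (y : Y) :
    IsProbabilityMeasure (treeMeasure g k y) := by
  induction k generalizing y with
  | zero => exact Measure.dirac.isProbabilityMeasure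
  | succ k ih =>
    constructor
    simp only [treeMeasure_succ_apply, measure_univ, inv_card_mul_sum_const]

lemma treeMeasure_apply_le_of_le [Nonempty ι] {c : ENNReal} {K k : ℕ}
    (hc : ∀ y, treeMeasure g K y B ≤ c) (hKk : K ≤ k) (y : Y) : treeMeasure g k y B ≤ c := by
  induction k, hKk using Nat.le_induction generalizing y with
  | base => exact hc y
  | succ k _ ih =>
    calc treeMeasure g (k + 1) y B
        = (Fintype.card ι : ENNReal)⁻¹ * ∑ i, treeMeasure g k (g i y) B :=
          treeMeasure_succ_apply g k y B
      _ ≤ (Fintype.card ι : ENNReal)⁻¹ * ∑ _i : ι, c := by gcongr; exact ih _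
      _ = c := inv_card_mul_sum_const c

lemma exists_mem_iterate_eq_of_treeMeasure_ne_zero (hg : ∀ i, Function.RightInverse (g i) f)
    (hB : MeasurableSet B) {k : ℕ} {y : Y} (hne : treeMeasure g k y B ≠ 0) :
    ∃ w ∈ B, f^[k] w = y := by
  induction k generalizing y with
  | zero =>
    rw [treeMeasure, Measure.dirac_apply' _ hB] at hne
    exact ⟨y, mem_of_indicator_ne_zero hne, rfl⟩
  | succ k ih =>
    rw [treeMeasure_succ_apply] at hne
    obtain ⟨i, -, hi⟩ := Finset.exists_ne_zero_of_sum_ne_zero (right_ne_zero_of_mul hne)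
    obtain ⟨w, hwB, hw⟩ := ih hi
    exact ⟨w, hwB, by rw [Function.iterate_succ_apply', hw, hg]⟩

lemma treeMeasure_apply_le_inv_card_pow [PseudoMetricSpace Y] {δ : ℝ}
    (hg : ∀ i, Function.RightInverse (g i) f)
    (hsep : ∀ y, Pairwise fun i j => δ ≤ dist (g i y) (g j y)) (hB : MeasurableSet B) {k : ℕ}
    (hclose : ∀ j < k, ∀ w ∈ B, ∀ v ∈ B, dist (f^[j] w) (f^[j] v) < δ) (y : Y) :
    treeMeasure g k y B ≤ (Fintype.card ι : ENNReal)⁻¹ ^ k := by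
  induction k generalizing y with
  | zero => simpa only [treeMeasure, pow_zero] using prob_le_one (μ := Measure.dirac y)
  | succ k ih =>
    replace ih := ih fun j hj => hclose j (hj.trans k.lt_succ_self)
    have hbranch : ∀ i j, treeMeasure g k (g i y) B ≠ 0 → treeMeasure g k (g j y) B ≠ 0 →
        i = j := by
      intro i j hi hj
      obtain ⟨w, hwB, hw⟩ := exists_mem_iterate_eq_of_treeMeasure_ne_zero hg hB hi
      obtain ⟨v, hvB, hv⟩ := exists_mem_iterate_eq_of_treeMeasure_ne_zero hg hB hj
      by_contra hij
      have hlt := hclose k k.lt_succ_self w hwB v hvB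
      rw [hw, hv] at hlt
      exact (hsep y hij).not_gt hlt
    rw [treeMeasure_succ_apply, pow_succ']
    gcongr
    by_cases hex : ∃ i, treeMeasure g k (g i y) B ≠ 0
    · obtain ⟨i, hi⟩ := hex
      rw [Fintype.sum_eq_single i fun j hji => not_ne_iff.1 fun hj => hji (hbranch j i hj hi)]
      exact ih _
    · push Not at hex
      simp only [hex, Finset.sum_const_zero, zero_le]

end Tree

section Compact

lemma exists_probabilityMeasure_forall_isOpen_le {α Y : Type*} [MetricSpace Y] [CompactSpace Y]
    [MeasurableSpace Y] [BorelSpace Y] (l : Filter α) [l.NeBot] (ν : α → ProbabilityMeasure Y) :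
    ∃ μ : ProbabilityMeasure Y, ∀ U, IsOpen U → ∀ c : ENNReal,
      (∀ᶠ a in l, (ν a : Measure Y) U ≤ c) → (μ : Measure Y) U ≤ c := by
  obtain ⟨μ, -, hμ⟩ := isCompact_univ.ultrafilter_le_nhds ((Ultrafilter.of l).map ν) (by simp)
  have hlim : Tendsto ν (Ultrafilter.of l) (nhds μ) := hμ
  refine ⟨μ, fun U hU c hc => ?_⟩
  have hle : ∀ᶠ a in Ultrafilter.of l, (ν a : Measure Y) U ≤ c := Ultrafilter.of_le l hc
  calc (μ : Measure Y) U
      ≤ liminf (fun a => (ν a : Measure Y) U) (Ultrafilter.of l) :=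
        ProbabilityMeasure.le_liminf_measure_open_of_tendsto hlim hU
    _ ≤ c := liminf_le_of_frequently_le' hle.frequently

/-- The `(m, δ)`-separated preimage property: every point has `m` preimages under `f` at mutual
distance at least `δ`. The preimages are listed by a map from `Fin m`, which for `0 < δ` is
automatically injective. -/
def HasSeparatedPreimages {Y : Type*} [PseudoMetricSpace Y] (f : Y → Y) (m : ℕ) (δ : ℝ) : Prop :=
  ∀ y, ∃ x : Fin m → Y, (∀ i, f (x i) = y) ∧ Pairwise fun i j => δ ≤ dist (x i) (x j)

lemma dist_iterate_lt_iterate {Y : Type*} [PseudoMetricSpace Y] {f : Y → Y} {ω : ℝ → ℝ}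
    (hω : StrictMonoOn ω (Ici 0)) (hf : ∀ x y, dist (f x) (f y) ≤ ω (dist x y)) {x y : Y} {t : ℝ}
    (hxy : dist x y < t) (j : ℕ) : dist (f^[j] x) (f^[j] y) < ω^[j] t := by
  induction j with
  | zero => exact hxy
  | succ j ih =>
    simp only [Function.iterate_succ_apply']
    exact (hf _ _).trans_lt (hω dist_nonneg (dist_nonneg.trans ih.le) ih)

variable {Y : Type*} [MetricSpace Y] [CompactSpace Y] [Nonempty Y] [MeasurableSpace Y]
  [BorelSpace Y] {f : Y → Y} {m : ℕ} {δ : ℝ}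

lemma exists_probabilityMeasure_isOpen_le_inv_pow (hm : m ≠ 0)
    (hf : HasSeparatedPreimages f m δ) :
    ∃ μ : ProbabilityMeasure Y, ∀ U, IsOpen U → ∀ K : ℕ,
      (∀ j < K, ∀ w ∈ U, ∀ v ∈ U, dist (f^[j] w) (f^[j] v) < δ) →
      (μ : Measure Y) U ≤ (m : ENNReal)⁻¹ ^ K := by
  have : NeZero m := ⟨hm⟩
  choose g hg hsep using hf
  let y₀ : Y := Classical.arbitrary Y
  obtain ⟨μ, hμ⟩ := exists_probabilityMeasure_forall_isOpen_le atTop fun k =>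
    (⟨treeMeasure (fun i y => g y i) k y₀, inferInstance⟩ : ProbabilityMeasure Y)
  refine ⟨μ, fun U hU K hclose => hμ U hU _ ?_⟩
  have hK : ∀ y, treeMeasure (fun i y => g y i) K y U ≤ (m : ENNReal)⁻¹ ^ K := by
    simpa only [Fintype.card_fin] using
      treeMeasure_apply_le_inv_card_pow (fun i y => hg y i) hsep hU.measurableSet hclose
  filter_upwards [eventually_ge_atTop K] with k hk
  exact treeMeasure_apply_le_of_le hK hk y₀

lemma exists_probabilityMeasure_ball_le_gauge {ω h : ℝ → ℝ} {η : ℝ}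
    (hω : StrictMonoOn ω (Ici 0)) (hωmaps : MapsTo ω (Ici 0) (Ici 0))
    (hωf : ∀ x y, dist (f x) (f y) ≤ ω (dist x y)) (hm : 2 ≤ m) (hδ : 0 < δ)
    (hf : HasSeparatedPreimages f m δ) (hη : 0 < η) (hmono : MonotoneOn h (Ioc 0 η))
    (hpos : ∀ t ∈ Ioc 0 η, 0 < h t)
    (hk : ∀ᶠ k : ℕ in atTop, ∃ t ∈ Ioc 0 η, h t = 1 / (m : ℝ) ^ k ∧ ω^[k] t ≤ δ / 2) :
    ∃ μ : ProbabilityMeasure Y, ∃ η' > 0, ∀ (x : Y) (r : ℝ), 0 < r → r ≤ η' →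
      (μ : Measure Y) (ball x r) ≤ ENNReal.ofReal (h r) := by
  have hm0 : 0 < m := by lia
  have hm1 : (1 : ℝ) < m := by exact_mod_cast hm
  obtain ⟨μ, hμ⟩ := exists_probabilityMeasure_isOpen_le_inv_pow hm0.ne' hf
  obtain ⟨η', hη', hscale⟩ := exists_forall_exists_le_and_one_div_pow_le hm1 hmono hpos
    (eventually_exists_forall_iterate_le hω.monotoneOn hωmaps hm1 hδ hη hmono hpos hk)
  refine ⟨μ, η', hη', fun x r hr hrη' => ?_⟩
  obtain ⟨k, t, hrt, hωt, hhr⟩ := hscale r hr hrη'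
  have hcenter : ∀ j < k + 1, ∀ w ∈ ball x r, dist (f^[j] w) (f^[j] x) < δ / 2 :=
    fun j hj w hw => (dist_iterate_lt_iterate hω hωf (lt_of_lt_of_le hw hrt) j).trans_le
      (hωt j (Nat.le_of_lt_succ hj))
  have hclose : ∀ j < k + 1, ∀ w ∈ ball x r, ∀ v ∈ ball x r, dist (f^[j] w) (f^[j] v) < δ := by
    intro j hj w hw v hv
    have htri := dist_triangle_right (f^[j] w) (f^[j] v) (f^[j] x)
    linarith [hcenter j hj w hw, hcenter j hj v hv]
  calc (μ : Measure Y) (ball x r)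
      ≤ (m : ENNReal)⁻¹ ^ (k + 1) := hμ _ isOpen_ball _ hclose
    _ = ENNReal.ofReal (1 / (m : ℝ) ^ (k + 1)) := by
        rw [one_div, ENNReal.ofReal_inv_of_pos (by positivity), ENNReal.ofReal_pow (by positivity),
          ENNReal.ofReal_natCast, ENNReal.inv_pow]
    _ ≤ ENNReal.ofReal (h r) := ENNReal.ofReal_le_ofReal hhr

end Compact

theorem exists_measure_ball_le_gauge_of_separated_preimages_general
    {E : Type*} [MetricSpace E] [MeasurableSpace E] [BorelSpace E]
    {X : Set E} (hXne : X.Nonempty) (hXc : IsCompact X) {f : E → E} (hfX : MapsTo f X X)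
    {ω : ℝ → ℝ} (hωmono : StrictMonoOn ω (Ici 0)) (hωnonneg : ∀ t, 0 ≤ t → 0 ≤ ω t)
    (hωmod : ∀ x ∈ X, ∀ y ∈ X, dist (f x) (f y) ≤ ω (dist x y))
    {m : ℕ} (hm : 2 ≤ m) {δ : ℝ} (hδ : 0 < δ)
    (hsep : ∀ y ∈ X, ∃ x : Fin m → E,
      (∀ i, x i ∈ X ∧ f (x i) = y) ∧ ∀ i j, i ≠ j → δ ≤ dist (x i) (x j))
    {η : ℝ} (hη : 0 < η) {h : ℝ → ℝ} (hmono : MonotoneOn h (Ioc 0 η))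
    (hpos : ∀ t ∈ Ioc 0 η, 0 < h t)
    (hk : ∀ᶠ k : ℕ in atTop, ∃ t ∈ Ioc (0 : ℝ) η, h t = 1 / (m : ℝ) ^ k ∧ ω^[k] t ≤ δ / 2) :
    ∃ μ : Measure E, IsProbabilityMeasure μ ∧ μ Xᶜ = 0 ∧
      ∃ η' : ℝ, 0 < η' ∧ ∀ x ∈ X, ∀ r : ℝ, 0 < r → r ≤ η' →
        μ (ball x r) ≤ ENNReal.ofReal (h r) := by
  have : CompactSpace X := isCompact_iff_compactSpace.1 hXc
  have : Nonempty X := hXne.to_subtype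
  have hsepX : HasSeparatedPreimages (hfX.restrict f X X) m δ := by
    intro y
    obtain ⟨x, hx, hdist⟩ := hsep y y.2
    exact ⟨fun i => ⟨x i, (hx i).1⟩, fun i => Subtype.ext (hx i).2, fun i j => hdist i j⟩
  obtain ⟨μ, η', hη', hμ⟩ := exists_probabilityMeasure_ball_le_gauge
    (f := hfX.restrict f X X) hωmono hωnonneg (fun x y : X => hωmod x x.2 y y.2)
    hm hδ hsepX hη hmono hpos hk
  refine ⟨(μ : Measure X).map Subtype.val,
    Measure.isProbabilityMeasure_map measurable_subtype_coe.aemeasurable, ?_, η', hη', ?_⟩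
  · rw [Measure.map_apply measurable_subtype_coe hXc.measurableSet.compl, preimage_compl,
      Subtype.coe_preimage_self, compl_univ, measure_empty]
  · intro x hx r hr hrη'
    rw [Measure.map_apply measurable_subtype_coe measurableSet_ball]
    exact hμ ⟨x, hx⟩ r hr hrη'

/-- Under the hypotheses of Statement 0, there is a Borel probability
measure `μ` supported on `X` and `η' > 0` with `μ(B(x,r)) ≤ h(r)` for all `x ∈ X` and
`0 < r ≤ η'`. -/
theorem exists_measure_ball_le_gauge_of_separated_preimages
    (n : ℕ) (hn : 1 ≤ n)
    (X : Set (EuclideanSpace ℝ (Fin n))) (hXne : X.Nonempty) (hXc : IsCompact X)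
    (f : EuclideanSpace ℝ (Fin n) → EuclideanSpace ℝ (Fin n))
    (hfc : ContinuousOn f X) (hfX : Set.MapsTo f X X)
    (ω : ℝ → ℝ) (hωmono : StrictMonoOn ω (Set.Ici 0))
    (hωcont : ContinuousOn ω (Set.Ici 0))
    (hω0 : ω 0 = 0) (hωnonneg : ∀ t, 0 ≤ t → 0 ≤ ω t)
    (hωmod : ∀ x ∈ X, ∀ y ∈ X, dist (f x) (f y) ≤ ω (dist x y))
    (m : ℕ) (hm : 2 ≤ m) (δ : ℝ) (hδ : 0 < δ)
    (hsep : ∀ y ∈ X, ∃ x : Fin m → EuclideanSpace ℝ (Fin n),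
      (∀ i, x i ∈ X ∧ f (x i) = y) ∧ ∀ i j, i ≠ j → δ ≤ dist (x i) (x j))
    (η : ℝ) (hη : 0 < η) (h : ℝ → ℝ)
    (hmono : StrictMonoOn h (Set.Ioc 0 η)) (hcont : ContinuousOn h (Set.Ioc 0 η))
    (hpos : ∀ t ∈ Set.Ioc 0 η, 0 < h t)
    (hlim : Filter.Tendsto h (nhdsWithin 0 (Set.Ioi 0)) (nhds 0))
    (hk : ∀ᶠ k : ℕ in Filter.atTop, ∃ t ∈ Set.Ioc (0:ℝ) η,
      h t = 1 / (m : ℝ) ^ k ∧ ω^[k] t ≤ δ / 2) :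
    ∃ μ : MeasureTheory.Measure (EuclideanSpace ℝ (Fin n)),
      MeasureTheory.IsProbabilityMeasure μ ∧ μ Xᶜ = 0 ∧
      ∃ η' : ℝ, 0 < η' ∧ ∀ x ∈ X, ∀ r : ℝ, 0 < r → r ≤ η' →
        μ (Metric.ball x r) ≤ ENNReal.ofReal (h r) := by
  exact exists_measure_ball_le_gauge_of_separated_preimages_general hXne hXc hfX hωmono hωnonneg
    hωmod hm hδ hsep hη hmono.monotoneOn hpos hk
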